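/- Let R = R₀ ⊕ R₁ be a Z₂-graded commutative ring and Q a Z₂-graded ideal of R. Then Q is a Z₂-graded maximal ideal of R if and only if either (1) Q = p + R₁ where p is a maximal ideal of R₀ containing R₁², or (2) Q = (R' :_{R₀} R₁) + R' where R' is a maximal R₀-submodule of R₁ with R₁³ ⊄ R'. -/

import Mathlib

/-- A `ℤ/2ℤ`-grading on a commutative ring `R`: additive subgroups `R0`, `R1` with
`R = R0 ⊕ R1` (internal direct sum) and `Rᵢ · Rⱼ ⊆ R_{i+j}`. -/
structure Z2Grading (R : Type*) [CommRing R] where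
  R0 : AddSubgroup R
  R1 : AddSubgroup R
  one_mem : (1 : R) ∈ R0
  mul_mem_00 : ∀ {a b : R}, a ∈ R0 → b ∈ R0 → a * b ∈ R0
  mul_mem_01 : ∀ {a b : R}, a ∈ R0 → b ∈ R1 → a * b ∈ R1
  mul_mem_11 : ∀ {a b : R}, a ∈ R1 → b ∈ R1 → a * b ∈ R0
  sup_eq_top : R0 ⊔ R1 = ⊤
  inf_eq_bot : R0 ⊓ R1 = ⊥

/-- The sum `S + T` of two subsets of `R`. -/
def setSum {R : Type*} [CommRing R] (S T : Set R) : Set R :=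
  {z : R | ∃ a ∈ S, ∃ b ∈ T, z = a + b}

/-- The additive subgroup of `R` generated by the pairwise products of `S` and `T`
(i.e. the product `S·T` of an ideal/submodule pair). -/
def mulSet {R : Type*} [CommRing R] (S T : Set R) : AddSubgroup R :=
  AddSubgroup.closure {x : R | ∃ a ∈ S, ∃ b ∈ T, x = a * b}

namespace Z2Grading

variable {R : Type*} [CommRing R] (G : Z2Grading R)

/-- The set of homogeneous elements of `R`, namely `R₀ ∪ R₁`. -/
def homogeneous : Set R := ↑G.R0 ∪ ↑G.R1

/-- `R₁²`, the ideal of `R₀` generated by the products of two elements of `R₁`. -/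
def sq : AddSubgroup R := mulSet (↑G.R1) (↑G.R1)

/-- `R₁³ = R₁² · R₁`, an `R₀`-submodule of `R₁`. -/
def cube : AddSubgroup R := mulSet (↑G.sq) (↑G.R1)

/-- `I` is an ideal of the subring `R₀` (viewed inside `R`). -/
def IsIdeal0 (I : AddSubgroup R) : Prop :=
  (I : Set R) ⊆ ↑G.R0 ∧ ∀ a ∈ G.R0, ∀ x ∈ I, a * x ∈ I

/-- `N` is an `R₀`-submodule of `R₁` (viewed inside `R`). -/
def IsSubmodule1 (N : AddSubgroup R) : Prop :=
  (N : Set R) ⊆ ↑G.R1 ∧ ∀ a ∈ G.R0, ∀ x ∈ N, a * x ∈ N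

/-- The residual `(N :_{R₀} R₁) = {a ∈ R₀ : a·R₁ ⊆ N}`. -/
def residual (N : AddSubgroup R) : AddSubgroup R where
  carrier := {a : R | a ∈ G.R0 ∧ ∀ r ∈ G.R1, a * r ∈ N}
  zero_mem' := ⟨G.R0.zero_mem, fun r _ => by simpa using N.zero_mem⟩
  add_mem' := by
    rintro a b ⟨ha0, ha⟩ ⟨hb0, hb⟩
    exact ⟨G.R0.add_mem ha0 hb0, fun r hr => by
      rw [add_mul]; exact N.add_mem (ha r hr) (hb r hr)⟩
  neg_mem' := by
    rintro a ⟨ha0, ha⟩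
    exact ⟨G.R0.neg_mem ha0, fun r hr => by
      rw [neg_mul]; exact N.neg_mem (ha r hr)⟩

/-- `J` is a `ℤ₂`-graded ideal of `R`: the homogeneous components of each of its
elements again belong to `J`, i.e. `J = (J ∩ R₀) ⊕ (J ∩ R₁)`. -/
def IsGradedIdeal (J : Ideal R) : Prop :=
  ∀ x ∈ J, ∃ a b : R, a ∈ G.R0 ∧ b ∈ G.R1 ∧ a ∈ J ∧ b ∈ J ∧ x = a + b

/-- `J` is a `ℤ₂`-graded prime ideal of `R`. -/
def IsGradedPrime (J : Ideal R) : Prop :=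
  G.IsGradedIdeal J ∧ J ≠ ⊤ ∧
    ∀ r ∈ G.homogeneous, ∀ s ∈ G.homogeneous, r * s ∈ J → r ∈ J ∨ s ∈ J

/-- `J` is a `ℤ₂`-graded maximal ideal of `R`. -/
def IsGradedMaximal (J : Ideal R) : Prop :=
  G.IsGradedIdeal J ∧ J ≠ ⊤ ∧
    ∀ J' : Ideal R, G.IsGradedIdeal J' → J ≤ J' → J' = J ∨ J' = ⊤

/-- `p` is a prime ideal of the subring `R₀`. -/
def IsPrime0 (p : AddSubgroup R) : Prop :=
  G.IsIdeal0 p ∧ (p : Set R) ≠ ↑G.R0 ∧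
    ∀ a ∈ G.R0, ∀ b ∈ G.R0, a * b ∈ p → a ∈ p ∨ b ∈ p

/-- `p` is a maximal ideal of the subring `R₀`. -/
def IsMaximal0 (p : AddSubgroup R) : Prop :=
  G.IsIdeal0 p ∧ (p : Set R) ≠ ↑G.R0 ∧
    ∀ I : AddSubgroup R, G.IsIdeal0 I → p ≤ I → (I : Set R) = ↑p ∨ (I : Set R) = ↑G.R0

/-- `N` is a prime `R₀`-submodule of `R₁`. -/
def IsPrimeSubmodule1 (N : AddSubgroup R) : Prop :=
  G.IsSubmodule1 N ∧ (N : Set R) ≠ ↑G.R1 ∧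
    ∀ a ∈ G.R0, ∀ m ∈ G.R1, a * m ∈ N → a ∈ G.residual N ∨ m ∈ N

/-- `N` is a maximal (proper) `R₀`-submodule of `R₁`. -/
def IsMaximalSubmodule1 (N : AddSubgroup R) : Prop :=
  G.IsSubmodule1 N ∧ (N : Set R) ≠ ↑G.R1 ∧
    ∀ N' : AddSubgroup R, G.IsSubmodule1 N' → N ≤ N' →
      (N' : Set R) = ↑N ∨ (N' : Set R) = ↑G.R1

/-- `R` is a `ℤ₂`-graded integral domain. -/
def IsGradedDomain : Prop :=
  (1 : R) ≠ 0 ∧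
    ∀ r ∈ G.homogeneous, ∀ s ∈ G.homogeneous, r * s = 0 → r = 0 ∨ s = 0

/-- `R` is a `ℤ₂`-graded field. -/
def IsGradedField : Prop :=
  (1 : R) ≠ 0 ∧ ∀ r ∈ G.homogeneous, r ≠ 0 → IsUnit r

/-- `R₀` as a subring of `R`. -/
def toSubring : Subring R where
  carrier := ↑G.R0
  one_mem' := G.one_mem
  mul_mem' := fun ha hb => G.mul_mem_00 ha hb
  zero_mem' := G.R0.zero_mem
  add_mem' := fun ha hb => G.R0.add_mem ha hb
  neg_mem' := fun ha => G.R0.neg_mem ha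

/-- The Zariski topology on the homogeneous spectrum `Z₂Spec R`: closed sets are the
`V(I) = {P : I ⊆ P}` for `ℤ₂`-graded ideals `I`. -/
def gradedZariski : TopologicalSpace {Q : Ideal R // G.IsGradedPrime Q} :=
  TopologicalSpace.generateFrom
    {U : Set {Q : Ideal R // G.IsGradedPrime Q} |
      ∃ I : Ideal R, G.IsGradedIdeal I ∧ U = {P | ¬ I ≤ P.1}}

end Z2Grading

/-! A graded ideal is the same thing as a pair `(I, N)` of an ideal of `R₀` and a submodule of
`R₁` with `I R₁ ⊆ N` and `N R₁ ⊆ I`, and inclusions are read off on the two parts. For `N = R₁`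
these pairs are the ideals of `R₀` containing `R₁²`, which gives the first case. In general, the
largest graded ideal with odd part `N` is `(N : R₁) + N`, so a graded maximal ideal not containing
`R₁` has this form with `N` maximal; if `R₁³ ⊆ N`, i.e. `R₁² ⊆ (N : R₁)`, it could still be
enlarged to `(N : R₁) + R₁`. Conversely, for `N` maximal the residual `(N : R₁)` is the
annihilator of the simple module `R₁ / N`, hence a maximal ideal of `R₀`, and it does not contain
`R₁²` when `R₁³ ⊄ N`. A strictly larger graded ideal then has odd part `R₁`, so its even part
contains both `R₁²` and `(N : R₁)` and is all of `R₀`. -/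

theorem mulSet_le_iff {R : Type*} [CommRing R] {S T : Set R} {H : AddSubgroup R} :
    mulSet S T ≤ H ↔ ∀ a ∈ S, ∀ b ∈ T, a * b ∈ H := by
  refine (AddSubgroup.closure_le H).trans ⟨fun h a ha b hb => h ⟨a, ha, b, hb, rfl⟩, ?_⟩
  rintro h _ ⟨a, ha, b, hb, rfl⟩
  exact h a ha b hb

namespace Z2Grading

variable {R : Type*} [CommRing R] {G : Z2Grading R} {I N N' : AddSubgroup R} {J K Q : Ideal R}

theorem exists_add_eq (G : Z2Grading R) (x : R) : ∃ a ∈ G.R0, ∃ b ∈ G.R1, a + b = x :=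
  AddSubgroup.mem_sup.1 (G.sup_eq_top ▸ AddSubgroup.mem_top x)

theorem eq_zero_of_mem_R0_of_mem_R1 {x : R} (h0 : x ∈ G.R0) (h1 : x ∈ G.R1) : x = 0 :=
  AddSubgroup.disjoint_def.1 (disjoint_iff.2 G.inf_eq_bot) h0 h1

theorem isSubmodule1_R1 (G : Z2Grading R) : G.IsSubmodule1 G.R1 :=
  ⟨subset_rfl, fun _ ha _ hx => G.mul_mem_01 ha hx⟩

theorem IsIdeal0.eq_R0_of_one_mem (hI : G.IsIdeal0 I) (h : (1 : R) ∈ I) : I = G.R0 :=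
  le_antisymm hI.1 fun a ha => by simpa using hI.2 a ha 1 h

theorem residual_mono (h : N ≤ N') : G.residual N ≤ G.residual N' :=
  fun _ ha => ⟨ha.1, fun r hr => h (ha.2 r hr)⟩

theorem le_residual_iff (hI : I ≤ G.R0) : I ≤ G.residual N ↔ mulSet I G.R1 ≤ N := by
  rw [mulSet_le_iff]
  exact ⟨fun h a ha => (h ha).2, fun h a ha => ⟨hI ha, h a ha⟩⟩

theorem sq_le_R0 (G : Z2Grading R) : G.sq ≤ G.R0 :=
  mulSet_le_iff.2 fun _ ha _ hb => G.mul_mem_11 ha hb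

theorem sq_le_residual_iff : G.sq ≤ G.residual N ↔ G.cube ≤ N :=
  le_residual_iff G.sq_le_R0

theorem IsSubmodule1.isIdeal0_residual (hN : G.IsSubmodule1 N) : G.IsIdeal0 (G.residual N) :=
  ⟨fun _ ha => ha.1, fun a ha x hx => ⟨G.mul_mem_00 ha hx.1, fun r hr => by
    rw [mul_assoc]
    exact hN.2 a ha _ (hx.2 r hr)⟩⟩

theorem IsSubmodule1.mulSet_R1_le_residual (hN : G.IsSubmodule1 N) :
    mulSet N G.R1 ≤ G.residual N :=
  mulSet_le_iff.2 fun n hn r hr => ⟨G.mul_mem_11 (hN.1 hn) hr, fun s hs => by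
    rw [mul_assoc, mul_comm]
    exact hN.2 _ (G.mul_mem_11 hr hs) n hn⟩

/-- The even part `J ∩ R₀` of an ideal `J`, encoded as a subgroup of `R` like the ideals of `R₀`. -/
def evenPart (G : Z2Grading R) (J : Ideal R) : AddSubgroup R := J.toAddSubgroup ⊓ G.R0

/-- The odd part `J ∩ R₁` of an ideal `J`, encoded as a subgroup of `R` like the submodules of
`R₁`. -/
def oddPart (G : Z2Grading R) (J : Ideal R) : AddSubgroup R := J.toAddSubgroup ⊓ G.R1

theorem evenPart_mono (h : J ≤ K) : G.evenPart J ≤ G.evenPart K :=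
  fun _ hx => ⟨h hx.1, hx.2⟩

theorem oddPart_mono (h : J ≤ K) : G.oddPart J ≤ G.oddPart K :=
  fun _ hx => ⟨h hx.1, hx.2⟩

theorem evenPart_eq_R0_iff : G.evenPart J = G.R0 ↔ J = ⊤ := by
  refine ⟨fun h => (Ideal.eq_top_iff_one J).2 (inf_eq_right.1 h G.one_mem), ?_⟩
  rintro rfl
  exact top_inf_eq G.R0

theorem oddPart_top : G.oddPart ⊤ = G.R1 :=
  top_inf_eq G.R1

theorem IsGradedIdeal.coe_eq_setSum (hJ : G.IsGradedIdeal J) :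
    (J : Set R) = setSum (G.evenPart J) (G.oddPart J) := by
  refine Set.Subset.antisymm (fun x hx => ?_) ?_
  · obtain ⟨a, b, ha, hb, haJ, hbJ, rfl⟩ := hJ x hx
    exact ⟨a, ⟨haJ, ha⟩, b, ⟨hbJ, hb⟩, rfl⟩
  · rintro _ ⟨a, ha, b, hb, rfl⟩
    exact J.add_mem ha.1 hb.1

theorem IsGradedIdeal.le_iff (hJ : G.IsGradedIdeal J) :
    J ≤ K ↔ G.evenPart J ≤ G.evenPart K ∧ G.oddPart J ≤ G.oddPart K := by
  refine ⟨fun h => ⟨evenPart_mono h, oddPart_mono h⟩, fun ⟨h0, h1⟩ x hx => ?_⟩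
  obtain ⟨a, b, ha, hb, haJ, hbJ, rfl⟩ := hJ x hx
  exact K.add_mem (h0 ⟨haJ, ha⟩).1 (h1 ⟨hbJ, hb⟩).1

theorem evenPart_eq_of_coe_eq_setSum (hI : I ≤ G.R0) (hN : N ≤ G.R1)
    (h : (J : Set R) = setSum I N) : G.evenPart J = I := by
  refine le_antisymm (fun x hx => ?_) fun x hx => ⟨?_, hI hx⟩
  · obtain ⟨a, ha, b, hb, rfl⟩ := h.subset hx.1
    have hb0 : b = 0 :=
      eq_zero_of_mem_R0_of_mem_R1 ((G.R0.add_mem_cancel_left (hI ha)).1 hx.2) (hN hb)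
    simpa [hb0] using ha
  · exact h.superset ⟨x, hx, 0, N.zero_mem, (add_zero x).symm⟩

theorem oddPart_eq_of_coe_eq_setSum (hI : I ≤ G.R0) (hN : N ≤ G.R1)
    (h : (J : Set R) = setSum I N) : G.oddPart J = N := by
  refine le_antisymm (fun x hx => ?_) fun x hx => ⟨?_, hN hx⟩
  · obtain ⟨a, ha, b, hb, rfl⟩ := h.subset hx.1
    have ha0 : a = 0 :=
      eq_zero_of_mem_R0_of_mem_R1 (hI ha) ((G.R1.add_mem_cancel_right (hN hb)).1 hx.2)
    simpa [ha0] using hb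
  · exact h.superset ⟨0, I.zero_mem, x, hx, (zero_add x).symm⟩

theorem IsGradedIdeal.coe_eq_setSum_iff (hJ : G.IsGradedIdeal J) (hI : I ≤ G.R0)
    (hN : N ≤ G.R1) :
    (J : Set R) = setSum I N ↔ G.evenPart J = I ∧ G.oddPart J = N := by
  refine ⟨fun h => ⟨evenPart_eq_of_coe_eq_setSum hI hN h, oddPart_eq_of_coe_eq_setSum hI hN h⟩, ?_⟩
  rintro ⟨rfl, rfl⟩
  exact hJ.coe_eq_setSum

/-- The pairs `(I, N)` that occur as the even and odd parts of an ideal of `R`: an ideal `I` of `R₀`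
and a submodule `N` of `R₁` with `I R₁ ⊆ N`, expressed through the residual, and `N R₁ ⊆ I`. -/
structure IsGradedPair (G : Z2Grading R) (I N : AddSubgroup R) : Prop where
  isIdeal0 : G.IsIdeal0 I
  isSubmodule1 : G.IsSubmodule1 N
  le_residual : I ≤ G.residual N
  mulSet_le : mulSet N G.R1 ≤ I

theorem isGradedPair_parts (G : Z2Grading R) (J : Ideal R) :
    G.IsGradedPair (G.evenPart J) (G.oddPart J) where
  isIdeal0 := ⟨fun _ hx => hx.2, fun a ha _ hx => ⟨J.mul_mem_left a hx.1, G.mul_mem_00 ha hx.2⟩⟩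
  isSubmodule1 :=
    ⟨fun _ hx => hx.2, fun a ha _ hx => ⟨J.mul_mem_left a hx.1, G.mul_mem_01 ha hx.2⟩⟩
  le_residual _ ha := ⟨ha.2, fun r hr => ⟨J.mul_mem_right r ha.1, G.mul_mem_01 ha.2 hr⟩⟩
  mulSet_le := mulSet_le_iff.2 fun _ hn r hr =>
    ⟨J.mul_mem_right r hn.1, G.mul_mem_11 hn.2 hr⟩

theorem sq_le_evenPart (h : G.oddPart J = G.R1) : G.sq ≤ G.evenPart J := by
  have hmul := (G.isGradedPair_parts J).mulSet_le
  rwa [h] at hmul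

theorem IsIdeal0.isGradedPair_R1 (hI : G.IsIdeal0 I) (hsq : G.sq ≤ I) :
    G.IsGradedPair I G.R1 where
  isIdeal0 := hI
  isSubmodule1 := G.isSubmodule1_R1
  le_residual _ ha := ⟨hI.1 ha, fun _ hr => G.mul_mem_01 (hI.1 ha) hr⟩
  mulSet_le := hsq

theorem IsSubmodule1.isGradedPair_residual (hN : G.IsSubmodule1 N) :
    G.IsGradedPair (G.residual N) N where
  isIdeal0 := hN.isIdeal0_residual
  isSubmodule1 := hN
  le_residual := le_rfl
  mulSet_le := hN.mulSet_R1_le_residual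

namespace IsGradedPair

/-- The graded ideal `I + N` with even part `I` and odd part `N`. -/
def toIdeal (h : G.IsGradedPair I N) : Ideal R where
  carrier := setSum I N
  zero_mem' := ⟨0, I.zero_mem, 0, N.zero_mem, (add_zero 0).symm⟩
  add_mem' := by
    rintro _ _ ⟨a, ha, b, hb, rfl⟩ ⟨c, hc, d, hd, rfl⟩
    exact ⟨a + c, I.add_mem ha hc, b + d, N.add_mem hb hd, add_add_add_comm a b c d⟩
  smul_mem' := by
    rintro x _ ⟨a, ha, b, hb, rfl⟩
    obtain ⟨u, hu, v, hv, rfl⟩ := G.exists_add_eq x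
    have hbv : b * v ∈ I := mulSet_le_iff.1 h.mulSet_le b hb v hv
    have hav : a * v ∈ N := (h.le_residual ha).2 v hv
    refine ⟨u * a + b * v, I.add_mem (h.isIdeal0.2 u hu a ha) hbv,
      u * b + a * v, N.add_mem (h.isSubmodule1.2 u hu b hb) hav, ?_⟩
    rw [smul_eq_mul]
    ring

theorem evenPart_toIdeal (h : G.IsGradedPair I N) : G.evenPart h.toIdeal = I :=
  evenPart_eq_of_coe_eq_setSum h.isIdeal0.1 h.isSubmodule1.1 rfl

theorem oddPart_toIdeal (h : G.IsGradedPair I N) : G.oddPart h.toIdeal = N :=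
  oddPart_eq_of_coe_eq_setSum h.isIdeal0.1 h.isSubmodule1.1 rfl

theorem isGradedIdeal_toIdeal (h : G.IsGradedPair I N) : G.IsGradedIdeal h.toIdeal := by
  rintro _ ⟨a, ha, b, hb, rfl⟩
  exact ⟨a, b, h.isIdeal0.1 ha, h.isSubmodule1.1 hb, ⟨a, ha, 0, N.zero_mem, (add_zero a).symm⟩,
    ⟨0, I.zero_mem, b, hb, (zero_add b).symm⟩, rfl⟩

end IsGradedPair

theorem IsGradedMaximal.eq_parts_or_eq_R0_R1 (hQ : G.IsGradedMaximal Q) (h : G.IsGradedPair I N)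
    (hI : G.evenPart Q ≤ I) (hN : G.oddPart Q ≤ N) :
    I = G.evenPart Q ∧ N = G.oddPart Q ∨ I = G.R0 ∧ N = G.R1 := by
  have hle : Q ≤ h.toIdeal :=
    hQ.1.le_iff.2 ⟨by rwa [h.evenPart_toIdeal], by rwa [h.oddPart_toIdeal]⟩
  rcases hQ.2.2 _ h.isGradedIdeal_toIdeal hle with heq | htop
  · exact .inl ⟨by rw [← heq, h.evenPart_toIdeal], by rw [← heq, h.oddPart_toIdeal]⟩
  · exact .inr ⟨by rw [← h.evenPart_toIdeal, evenPart_eq_R0_iff, htop],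
      by rw [← h.oddPart_toIdeal, htop, oddPart_top]⟩

theorem IsMaximalSubmodule1.exists_add_mul_eq (hN : G.IsMaximalSubmodule1 N) {m t : R}
    (hm : m ∈ G.R1) (hmN : m ∉ N) (ht : t ∈ G.R1) : ∃ n ∈ N, ∃ a ∈ G.R0, n + a * m = t := by
  obtain ⟨hsub, -, hmax⟩ := hN
  let M : AddSubgroup R := N ⊔ G.R0.map (AddMonoidHom.mulRight m)
  have mem_M {x : R} : x ∈ M ↔ ∃ n ∈ N, ∃ a ∈ G.R0, n + a * m = x := by
    simp [M, AddSubgroup.mem_sup]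
  have hM : G.IsSubmodule1 M := by
    refine ⟨fun x hx => ?_, fun c hc x hx => ?_⟩ <;> obtain ⟨n, hn, a, ha, rfl⟩ := mem_M.1 hx
    · exact G.R1.add_mem (hsub.1 hn) (G.mul_mem_01 ha hm)
    · exact mem_M.2 ⟨c * n, hsub.2 c hc n hn, c * a, G.mul_mem_00 hc ha, by ring⟩
  have hmM : m ∈ M := mem_M.2 ⟨0, N.zero_mem, 1, G.one_mem, by simp⟩
  have hMR1 : (M : Set R) = G.R1 :=
    (hmax M hM le_sup_left).resolve_left fun h => hmN (h.subset hmM)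
  exact mem_M.1 (hMR1.superset ht)

theorem IsMaximalSubmodule1.isPrimeSubmodule1 (hN : G.IsMaximalSubmodule1 N) :
    G.IsPrimeSubmodule1 N := by
  refine ⟨hN.1, hN.2.1, fun a ha m hm ham => or_iff_not_imp_right.2 fun hmN => ⟨ha, fun t ht => ?_⟩⟩
  obtain ⟨n, hn, b, hb, rfl⟩ := hN.exists_add_mul_eq hm hmN ht
  rw [mul_add, mul_left_comm]
  exact N.add_mem (hN.1.2 a ha n hn) (hN.1.2 b hb _ ham)

theorem IsMaximalSubmodule1.isMaximal0_residual (hN : G.IsMaximalSubmodule1 N) :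
    G.IsMaximal0 (G.residual N) := by
  have hsub : G.IsSubmodule1 N := hN.1
  refine ⟨hsub.isIdeal0_residual, fun h => hN.2.1 ?_, fun I hI hle => ?_⟩
  · have h1 : (1 : R) ∈ G.residual N := h.superset G.one_mem
    exact Set.Subset.antisymm hsub.1 fun r hr => by simpa using h1.2 r hr
  refine or_iff_not_imp_left.2 fun hne => congrArg _ (hI.eq_R0_of_one_mem ?_)
  obtain ⟨s, hsI, hs⟩ : ∃ s ∈ I, s ∉ G.residual N :=
    Set.not_subset.1 fun h => hne (Set.Subset.antisymm h hle)
  have hs0 : s ∈ G.R0 := hI.1 hsI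
  obtain ⟨r, hr, hsr⟩ : ∃ r ∈ G.R1, s * r ∉ N := by
    by_contra! h
    exact hs ⟨hs0, h⟩
  have hrN : r ∉ N := fun h => hsr (hsub.2 s hs0 r h)
  obtain ⟨n, hn, a, ha, hnr⟩ := hN.exists_add_mul_eq (G.mul_mem_01 hs0 hr) hsr hr
  have hmul : (1 - a * s) * r ∈ N := by
    rwa [show (1 - a * s) * r = n by linear_combination -hnr]
  have hres : 1 - a * s ∈ G.residual N :=
    (hN.isPrimeSubmodule1.2.2 _ (G.R0.sub_mem G.one_mem (G.mul_mem_00 ha hs0)) r hr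
      hmul).resolve_right hrN
  exact sub_add_cancel 1 (a * s) ▸ I.add_mem (hle hres) (hI.2 a ha s hsI)

theorem IsGradedIdeal.isGradedMaximal_iff_of_oddPart_eq_R1 (hQ : G.IsGradedIdeal Q)
    (hodd : G.oddPart Q = G.R1) : G.IsGradedMaximal Q ↔ G.IsMaximal0 (G.evenPart Q) := by
  refine ⟨fun hmax => ⟨(G.isGradedPair_parts Q).isIdeal0, fun h => ?_, fun I hI hle => ?_⟩, ?_⟩
  · exact hmax.2.1 (evenPart_eq_R0_iff.1 (SetLike.coe_injective h))
  · have hpair : G.IsGradedPair I G.R1 := hI.isGradedPair_R1 ((sq_le_evenPart hodd).trans hle)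
    exact (hmax.eq_parts_or_eq_R0_R1 hpair hle hodd.le).imp
      (fun h => congrArg _ h.1) (fun h => congrArg _ h.1)
  · rintro ⟨-, hne, hmax⟩
    refine ⟨hQ, fun h => hne (congrArg _ (evenPart_eq_R0_iff.2 h)), fun J hJ hle => ?_⟩
    refine (hmax _ (G.isGradedPair_parts J).isIdeal0 (evenPart_mono hle)).imp (fun h => ?_)
      fun h => evenPart_eq_R0_iff.1 (SetLike.coe_injective h)
    exact (hJ.le_iff.2 ⟨h.le, hodd ▸ inf_le_right⟩).antisymm hle

theorem IsGradedMaximal.evenPart_eq_residual (hQ : G.IsGradedMaximal Q)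
    (hodd : G.oddPart Q ≠ G.R1) : G.evenPart Q = G.residual (G.oddPart Q) := by
  have hparts := G.isGradedPair_parts Q
  rcases hQ.eq_parts_or_eq_R0_R1 hparts.isSubmodule1.isGradedPair_residual hparts.le_residual le_rfl
    with h | h
  · exact h.1.symm
  · exact absurd h.2 hodd

theorem IsGradedMaximal.isMaximalSubmodule1_oddPart (hQ : G.IsGradedMaximal Q)
    (hodd : G.oddPart Q ≠ G.R1) : G.IsMaximalSubmodule1 (G.oddPart Q) := by
  have hparts := G.isGradedPair_parts Q
  refine ⟨hparts.isSubmodule1, fun h => hodd (SetLike.coe_injective h), fun N hN hle => ?_⟩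
  exact (hQ.eq_parts_or_eq_R0_R1 hN.isGradedPair_residual
    (hparts.le_residual.trans (residual_mono hle)) hle).imp
    (fun h => congrArg _ h.2) (fun h => congrArg _ h.2)

theorem IsGradedMaximal.not_cube_le_oddPart (hQ : G.IsGradedMaximal Q)
    (hodd : G.oddPart Q ≠ G.R1) : ¬ G.cube ≤ G.oddPart Q := by
  intro hcube
  have hsq : G.sq ≤ G.evenPart Q := by
    rwa [hQ.evenPart_eq_residual hodd, sq_le_residual_iff]
  have hpair : G.IsGradedPair (G.evenPart Q) G.R1 :=
    (G.isGradedPair_parts Q).isIdeal0.isGradedPair_R1 hsq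
  rcases hQ.eq_parts_or_eq_R0_R1 hpair le_rfl inf_le_right with h | h
  · exact hodd h.2.symm
  · exact hQ.2.1 (evenPart_eq_R0_iff.1 h.1)

theorem IsGradedIdeal.isGradedMaximal_of_evenPart_eq_residual (hQ : G.IsGradedIdeal Q)
    (hodd : G.IsMaximalSubmodule1 (G.oddPart Q)) (hcube : ¬ G.cube ≤ G.oddPart Q)
    (heven : G.evenPart Q = G.residual (G.oddPart Q)) : G.IsGradedMaximal Q := by
  refine ⟨hQ, fun h => hodd.2.1 (by rw [h, oddPart_top]), fun J hJ hle => ?_⟩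
  have hparts := G.isGradedPair_parts J
  refine (hodd.2.2 _ hparts.isSubmodule1 (oddPart_mono hle)).imp (fun h => ?_) fun h => ?_
  · have hJodd : G.oddPart J = G.oddPart Q := SetLike.coe_injective h
    have hJeven : G.evenPart J ≤ G.evenPart Q := by
      rw [heven, ← hJodd]
      exact hparts.le_residual
    exact (hJ.le_iff.2 ⟨hJeven, hJodd.le⟩).antisymm hle
  · have hsq : G.sq ≤ G.evenPart J := sq_le_evenPart (SetLike.coe_injective h)
    have hres : G.residual (G.oddPart Q) ≤ G.evenPart J := heven ▸ evenPart_mono hle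
    refine evenPart_eq_R0_iff.1 (SetLike.coe_injective
      ((hodd.isMaximal0_residual.2.2 _ hparts.isIdeal0 hres).resolve_left fun heq => hcube ?_))
    exact sq_le_residual_iff.1 (hsq.trans heq.le)

end Z2Grading

/-- a `ℤ₂`-graded ideal `Q` is `ℤ₂`-graded maximal iff either `Q = p + R₁`
with `p` a maximal ideal of `R₀` containing `R₁²`, or `Q = (R' :_{R₀} R₁) + R'` with `R'` a
maximal `R₀`-submodule of `R₁` such that `R₁³ ⊄ R'`. -/
theorem graded_maximal_iff {R : Type*} [CommRing R] (G : Z2Grading R) (Q : Ideal R)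
    (hQ : G.IsGradedIdeal Q) :
    G.IsGradedMaximal Q ↔
      (∃ p : AddSubgroup R, G.IsMaximal0 p ∧ (G.sq : Set R) ⊆ ↑p ∧
        (Q : Set R) = setSum ↑p ↑G.R1) ∨
      (∃ N : AddSubgroup R, G.IsMaximalSubmodule1 N ∧ ¬ ((G.cube : Set R) ⊆ ↑N) ∧
        (Q : Set R) = setSum ↑(G.residual N) ↑N) := by
  constructor
  · intro hmax
    by_cases hodd : G.oddPart Q = G.R1
    · exact .inl ⟨G.evenPart Q, (hQ.isGradedMaximal_iff_of_oddPart_eq_R1 hodd).1 hmax,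
        Z2Grading.sq_le_evenPart hodd, hodd ▸ hQ.coe_eq_setSum⟩
    · exact .inr ⟨G.oddPart Q, hmax.isMaximalSubmodule1_oddPart hodd,
        hmax.not_cube_le_oddPart hodd, hmax.evenPart_eq_residual hodd ▸ hQ.coe_eq_setSum⟩
  · rintro (⟨p, hp, -, hsum⟩ | ⟨N, hN, hcube, hsum⟩)
    · obtain ⟨rfl, hodd⟩ := (hQ.coe_eq_setSum_iff hp.1.1 le_rfl).1 hsum
      exact (hQ.isGradedMaximal_iff_of_oddPart_eq_R1 hodd).2 hp
    · obtain ⟨heven, rfl⟩ := (hQ.coe_eq_setSum_iff hN.1.isIdeal0_residual.1 hN.1.1).1 hsum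
      exact hQ.isGradedMaximal_of_evenPart_eq_residual hN hcube heven
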